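/- Let x : (0,∞) → ℝ be twice continuously differentiable, let y ∈ ℝ³ with t := |y|²/2 > 0, assume x′(t)² ≠ 2t and that x″(t) = (8x(t) − 10t·x′(t) − 3x′(t)³)/(6(x′(t)²·t − 2t²)). Define φ(z) := x(|z|²/2) for z ∈ ℝ³, and let D(y) be the 6×6 block matrix [[Hess φ(y), −μ(y)], [μ(y), Hess φ(y)]]. Then the two conditions 'φ(y) − ∂_r φ(y) > 0 and D(y) is positive definite' hold simultaneously if and only if x(t) > 2t·x′(t) and x′(t) > √(2t), i.e. if and only if x(t) > 2t·x′(t) > 2t·√(2t). -/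

import Mathlib

open Matrix

/-- The radial derivative `∂_r f(y) := Σᵢ yᵢ ∂f/∂yᵢ(y)` of a function on `ℝ³`. -/
noncomputable def radialDeriv (f : (Fin 3 → ℝ) → ℝ) (y : Fin 3 → ℝ) : ℝ :=
  ∑ i, y i * fderiv ℝ f y (Pi.single i 1)

/-- The Hessian matrix `(∂²f/∂yᵢ∂yⱼ(y))` of a function on `ℝ³`. -/
noncomputable def hessian (f : (Fin 3 → ℝ) → ℝ) (y : Fin 3 → ℝ) :
    Matrix (Fin 3) (Fin 3) ℝ :=
  Matrix.of fun i j => fderiv ℝ (fun z => fderiv ℝ f z (Pi.single j 1)) y (Pi.single i 1)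

/-- The skew-symmetric matrix `μ(y)` associated to `y ∈ ℝ³`, with rows
`(0, y₃, −y₂)`, `(−y₃, 0, y₁)`, `(y₂, −y₁, 0)`. -/
def muMat (y : Fin 3 → ℝ) : Matrix (Fin 3) (Fin 3) ℝ :=
  !![0, y 2, -(y 1);
     -(y 2), 0, y 0;
     y 1, -(y 0), 0]

/-!
With `t = |y|² / 2`, the chain rule gives `Hess φ(y) = x′(t) I + x″(t) y yᵀ`, while `μ(y)` is
`v ↦ v × y`. Hence the quadratic form of `D(y)` at `(u, v)` is
`x′ (|u|² + |v|²) + x″ ((y · u)² + (y · v)²) + 2 v · (u × y)`.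
Along `y` it is governed by `x′ + 2t x″`. Across `y`, the bound
`|y| |v · (u × y)| ≤ |u × y| |v × y|`, which is sharp, shows that it is governed by `x′ - |y|`.
So `D(y)` is positive definite iff both numbers are positive. The radial ODE turns the first one
into `8 (x - 2t x′) / (3 (x′² - 2t))`, which is positive as soon as the other two conditions hold.
-/

open Filter Topology

section DotProduct

variable {ι R : Type*} [Fintype ι] [Ring R] [LinearOrder R] [IsStrictOrderedRing R]

lemma dotProduct_self_nonneg (v : ι → R) : 0 ≤ v ⬝ᵥ v :=
  Finset.sum_nonneg fun _ _ => mul_self_nonneg _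

lemma dotProduct_self_pos {v : ι → R} (hv : v ≠ 0) : 0 < v ⬝ᵥ v :=
  (dotProduct_self_nonneg v).lt_of_ne' (dotProduct_self_eq_zero.not.2 hv)

lemma sq_sqrt_dotProduct_self (v : ι → ℝ) : √(v ⬝ᵥ v) ^ 2 = v ⬝ᵥ v :=
  Real.sq_sqrt (dotProduct_self_nonneg v)

end DotProduct

section RadialCalculus

variable {ι : Type*} [Fintype ι]

/-- The radial coordinate `|z|² / 2` on `ℝ^ι`, in terms of the Euclidean norm (the norm carried by
the type `ι → ℝ` is the sup norm). -/
noncomputable def halfNormSq (z : ι → ℝ) : ℝ :=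
  (∑ i, z i ^ 2) / 2

lemma dotProduct_self_eq_two_mul_halfNormSq (z : ι → ℝ) : z ⬝ᵥ z = 2 * halfNormSq z := by
  simp only [dotProduct, halfNormSq, ← sq]
  ring

lemma hasFDerivAt_halfNormSq (z : ι → ℝ) :
    HasFDerivAt halfNormSq (∑ i, z i • ContinuousLinearMap.proj (R := ℝ) (φ := fun _ : ι => ℝ) i)
      z := by
  have h := (HasFDerivAt.fun_sum (u := Finset.univ)
    fun i _ => (hasFDerivAt_apply (𝕜 := ℝ) i z).pow 2).mul_const (2⁻¹ : ℝ)
  refine h.congr_fderiv ?_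
  ext v
  simp [Finset.mul_sum, mul_assoc]

lemma hasFDerivAt_comp_halfNormSq {g : ℝ → ℝ} {z : ι → ℝ}
    (hg : DifferentiableAt ℝ g (halfNormSq z)) :
    HasFDerivAt (fun w => g (halfNormSq w)) (deriv g (halfNormSq z) •
      ∑ i, z i • ContinuousLinearMap.proj (R := ℝ) (φ := fun _ : ι => ℝ) i) z :=
  hg.hasDerivAt.comp_hasFDerivAt z (hasFDerivAt_halfNormSq z)

variable [DecidableEq ι]

lemma fderiv_comp_halfNormSq_single {g : ℝ → ℝ} {z : ι → ℝ}
    (hg : DifferentiableAt ℝ g (halfNormSq z)) (j : ι) :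
    fderiv ℝ (fun w => g (halfNormSq w)) z (Pi.single j 1) = deriv g (halfNormSq z) * z j := by
  simp [(hasFDerivAt_comp_halfNormSq hg).fderiv, Pi.single_apply]

lemma fderiv_fderiv_comp_halfNormSq_single {g : ℝ → ℝ} {z : ι → ℝ}
    (hg : ∀ᶠ s in 𝓝 (halfNormSq z), DifferentiableAt ℝ g s)
    (hg' : DifferentiableAt ℝ (deriv g) (halfNormSq z)) (i j : ι) :
    fderiv ℝ (fun w => fderiv ℝ (fun w => g (halfNormSq w)) w (Pi.single j 1)) z
        (Pi.single i 1) =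
      (if i = j then deriv g (halfNormSq z) else 0) +
        deriv (deriv g) (halfNormSq z) * (z i * z j) := by
  have hgrad : (fun w => fderiv ℝ (fun w => g (halfNormSq w)) w (Pi.single j 1)) =ᶠ[𝓝 z]
      fun w => deriv g (halfNormSq w) * w j :=
    ((hasFDerivAt_halfNormSq z).continuousAt.eventually hg).mono
      fun w hw => fderiv_comp_halfNormSq_single hw j
  have hprod := (hasFDerivAt_comp_halfNormSq hg').fun_mul (hasFDerivAt_apply (𝕜 := ℝ) j z)
  rw [hgrad.fderiv_eq, hprod.fderiv]
  simp only [_root_.add_apply, _root_.smul_apply, _root_.sum_apply, ContinuousLinearMap.proj_apply,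
    Pi.single_apply, eq_comm (a := j), smul_eq_mul, mul_ite, mul_one, mul_zero,
    Finset.sum_ite_eq', Finset.mem_univ, if_true]
  ring

end RadialCalculus

lemma radialDeriv_comp_halfNormSq {g : ℝ → ℝ} {y : Fin 3 → ℝ}
    (hg : DifferentiableAt ℝ g (halfNormSq y)) :
    radialDeriv (fun z => g (halfNormSq z)) y = 2 * halfNormSq y * deriv g (halfNormSq y) := by
  rw [← dotProduct_self_eq_two_mul_halfNormSq, dotProduct, Finset.sum_mul]
  exact Finset.sum_congr rfl fun i _ => by rw [fderiv_comp_halfNormSq_single hg]; ring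

lemma hessian_comp_halfNormSq {g : ℝ → ℝ} {y : Fin 3 → ℝ}
    (hg : ∀ᶠ s in 𝓝 (halfNormSq y), DifferentiableAt ℝ g s)
    (hg' : DifferentiableAt ℝ (deriv g) (halfNormSq y)) :
    hessian (fun z => g (halfNormSq z)) y =
      deriv g (halfNormSq y) • 1 + deriv (deriv g) (halfNormSq y) • vecMulVec y y := by
  ext i j
  simp [hessian, fderiv_fderiv_comp_halfNormSq_single hg hg', one_apply, vecMulVec_apply]

section BlockMatrices

variable {n : Type*} [Fintype n]

lemma sumElim_dotProduct_fromBlocks_mulVec {R : Type*} [CommRing R] (A : Matrix n n R)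
    {B : Matrix n n R} (hB : Bᵀ = -B) (u v : n → R) :
    Sum.elim u v ⬝ᵥ fromBlocks A (-B) B A *ᵥ Sum.elim u v =
      u ⬝ᵥ A *ᵥ u + v ⬝ᵥ A *ᵥ v + 2 * (v ⬝ᵥ B *ᵥ u) := by
  have hskew : u ⬝ᵥ (-B) *ᵥ v = v ⬝ᵥ B *ᵥ u := by
    rw [← hB, mulVec_transpose, dotProduct_comm, dotProduct_mulVec]
  simp only [fromBlocks_mulVec, Sum.elim_comp_inl, Sum.elim_comp_inr,
    sumElim_dotProduct_sumElim, dotProduct_add, hskew]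
  ring

lemma posDef_fromBlocks_neg_iff {A B : Matrix n n ℝ} (hA : Aᵀ = A) (hB : Bᵀ = -B) :
    (fromBlocks A (-B) B A).PosDef ↔
      ∀ u v : n → ℝ, (u ≠ 0 ∨ v ≠ 0) → 0 < u ⬝ᵥ A *ᵥ u + v ⬝ᵥ A *ᵥ v + 2 * (v ⬝ᵥ B *ᵥ u) := by
  have hsymm : (fromBlocks A (-B) B A).IsHermitian :=
    IsHermitian.fromBlocks hA (by simp [conjTranspose_eq_transpose_of_trivial, hB]) hA
  have hzero (u v : n → ℝ) : Sum.elim u v ≠ 0 ↔ u ≠ 0 ∨ v ≠ 0 := by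
    rw [← Sum.elim_zero_zero, Ne, Sum.elim_eq_iff, not_and_or]
  rw [posDef_iff_dotProduct_mulVec]
  simp only [hsymm, true_and, star_trivial]
  refine ⟨fun h u v huv => ?_, fun h w hw => ?_⟩
  · rw [← sumElim_dotProduct_fromBlocks_mulVec A hB]
    exact h ((hzero u v).2 huv)
  · rw [← Sum.elim_comp_inl_inr w] at hw ⊢
    rw [sumElim_dotProduct_fromBlocks_mulVec A hB]
    exact h _ _ ((hzero _ _).1 hw)

lemma dotProduct_smul_one_add_smul_vecMulVec_mulVec [DecidableEq n] {R : Type*} [CommRing R]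
    (p s : R) (y v : n → R) :
    v ⬝ᵥ (p • (1 : Matrix n n R) + s • vecMulVec y y) *ᵥ v =
      p * (v ⬝ᵥ v) + s * (y ⬝ᵥ v) ^ 2 := by
  simp only [add_mulVec, smul_mulVec, one_mulVec, vecMulVec_mulVec, dotProduct_add,
    dotProduct_smul, smul_eq_mul, op_smul_eq_smul, dotProduct_comm v y]
  ring

end BlockMatrices

section CrossProduct

lemma transpose_muMat (y : Fin 3 → ℝ) : (muMat y)ᵀ = -muMat y := by
  ext i j
  fin_cases i <;> fin_cases j <;> simp [muMat]

lemma muMat_mulVec (y v : Fin 3 → ℝ) : muMat y *ᵥ v = v ⨯₃ y := by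
  ext i
  fin_cases i <;>
    simp only [muMat, mulVec, vec3_dotProduct, cross_apply, of_apply, Fin.reduceFinMk, cons_val,
      Fin.zero_eta, Fin.mk_one, cons_val', cons_val_fin_one, Fin.isValue] <;>
    ring

variable {R : Type*} [CommRing R]

lemma dotProduct_cross_self (u v : Fin 3 → R) :
    u ⨯₃ v ⬝ᵥ u ⨯₃ v = (u ⬝ᵥ u) * (v ⬝ᵥ v) - (u ⬝ᵥ v) ^ 2 := by
  rw [cross_dot_cross, dotProduct_comm v u, sq]

lemma dotProduct_self_mul_dotProduct_self (y v : Fin 3 → R) :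
    (y ⬝ᵥ y) * (v ⬝ᵥ v) = (y ⬝ᵥ v) ^ 2 + v ⨯₃ y ⬝ᵥ v ⨯₃ y := by
  rw [dotProduct_cross_self, dotProduct_comm v y]
  ring

lemma cross_cross_cross_right (u v y : Fin 3 → R) :
    (u ⨯₃ y) ⨯₃ (v ⨯₃ y) = (u ⬝ᵥ v ⨯₃ y) • y := by
  rw [cross_cross_eq_smul_sub_smul, dot_cross_self, zero_smul, sub_zero]

lemma dotProduct_self_mul_triple_product_sq_le [LinearOrder R] [IsStrictOrderedRing R]
    (u v y : Fin 3 → R) :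
    (y ⬝ᵥ y) * (u ⬝ᵥ v ⨯₃ y) ^ 2 ≤ (u ⨯₃ y ⬝ᵥ u ⨯₃ y) * (v ⨯₃ y ⬝ᵥ v ⨯₃ y) := by
  have h := dotProduct_cross_self (u ⨯₃ y) (v ⨯₃ y)
  rw [cross_cross_cross_right, dotProduct_smul, smul_dotProduct, smul_eq_mul, smul_eq_mul] at h
  linarith [sq_nonneg (u ⨯₃ y ⬝ᵥ v ⨯₃ y)]

lemma abs_two_mul_sqrt_mul_triple_product_le (u v y : Fin 3 → ℝ) :
    |2 * √(y ⬝ᵥ y) * (u ⬝ᵥ v ⨯₃ y)| ≤ u ⨯₃ y ⬝ᵥ u ⨯₃ y + v ⨯₃ y ⬝ᵥ v ⨯₃ y := by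
  have hu := dotProduct_self_nonneg (u ⨯₃ y)
  have hv := dotProduct_self_nonneg (v ⨯₃ y)
  refine abs_le_of_sq_le_sq ?_ (add_nonneg hu hv)
  calc (2 * √(y ⬝ᵥ y) * (u ⬝ᵥ v ⨯₃ y)) ^ 2
      = 4 * ((y ⬝ᵥ y) * (u ⬝ᵥ v ⨯₃ y) ^ 2) := by
        rw [mul_pow, mul_pow, sq_sqrt_dotProduct_self]; ring
    _ ≤ 4 * ((u ⨯₃ y ⬝ᵥ u ⨯₃ y) * (v ⨯₃ y ⬝ᵥ v ⨯₃ y)) := by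
        gcongr 4 * ?_
        exact dotProduct_self_mul_triple_product_sq_le u v y
    _ ≤ (u ⨯₃ y ⬝ᵥ u ⨯₃ y + v ⨯₃ y ⬝ᵥ v ⨯₃ y) ^ 2 := by
        rw [← mul_assoc]
        exact four_mul_le_sq_add _ _

end CrossProduct

/-- The quadratic form of the matrix `[[H, -μ(y)], [μ(y), H]]` with `H = p I + s y yᵀ`, written in
terms of the components `u`, `v` of a vector of `ℝ³ × ℝ³`. -/
noncomputable def radialForm (p s : ℝ) (y u v : Fin 3 → ℝ) : ℝ :=
  p * (u ⬝ᵥ u + v ⬝ᵥ v) + s * ((y ⬝ᵥ u) ^ 2 + (y ⬝ᵥ v) ^ 2) + 2 * (v ⬝ᵥ u ⨯₃ y)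

lemma posDef_fromBlocks_muMat_iff_radialForm_pos (p s : ℝ) (y : Fin 3 → ℝ) :
    (fromBlocks (p • 1 + s • vecMulVec y y) (-muMat y) (muMat y)
        (p • 1 + s • vecMulVec y y)).PosDef ↔
      ∀ u v, (u ≠ 0 ∨ v ≠ 0) → 0 < radialForm p s y u v := by
  have hsymm : (p • (1 : Matrix (Fin 3) (Fin 3) ℝ) + s • vecMulVec y y)ᵀ =
      p • 1 + s • vecMulVec y y := by simp [transpose_vecMulVec]
  have hform (u v : Fin 3 → ℝ) : p * (u ⬝ᵥ u) + s * (y ⬝ᵥ u) ^ 2 +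
      (p * (v ⬝ᵥ v) + s * (y ⬝ᵥ v) ^ 2) + 2 * (v ⬝ᵥ u ⨯₃ y) = radialForm p s y u v := by
    rw [radialForm]
    ring
  simp only [posDef_fromBlocks_neg_iff hsymm (transpose_muMat y),
    dotProduct_smul_one_add_smul_vecMulVec_mulVec, muMat_mulVec, hform]

section RadialForm

variable {p s : ℝ} {y : Fin 3 → ℝ}

lemma radialForm_self_zero (p s : ℝ) (y : Fin 3 → ℝ) :
    radialForm p s y y 0 = (y ⬝ᵥ y) * (p + s * (y ⬝ᵥ y)) := by
  simp only [radialForm, cross_self, dotProduct_zero, add_zero, zero_pow two_ne_zero,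
    mul_zero]
  ring

-- For `w ⊥ y` the vector `(|y| w, -w × y)` is an eigenvector with eigenvalue `p - |y|`.
lemma radialForm_of_dotProduct_eq_zero (p s : ℝ) {w : Fin 3 → ℝ} (hw : w ⬝ᵥ y = 0) :
    radialForm p s y (√(y ⬝ᵥ y) • w) (-(w ⨯₃ y)) =
      2 * (y ⬝ᵥ y) * (w ⬝ᵥ w) * (p - √(y ⬝ᵥ y)) := by
  simp only [radialForm, map_smul, LinearMap.smul_apply, smul_dotProduct, dotProduct_smul,
    neg_dotProduct, dotProduct_neg, smul_eq_mul, dotProduct_comm y w, hw, dot_cross_self,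
    dotProduct_cross_self]
  linear_combination p * (w ⬝ᵥ w) * sq_sqrt_dotProduct_self y

lemma dotProduct_self_mul_radialForm (p s : ℝ) (y u v : Fin 3 → ℝ) :
    (y ⬝ᵥ y) * radialForm p s y u v =
      (p + s * (y ⬝ᵥ y)) * ((y ⬝ᵥ u) ^ 2 + (y ⬝ᵥ v) ^ 2) +
        p * (u ⨯₃ y ⬝ᵥ u ⨯₃ y + v ⨯₃ y ⬝ᵥ v ⨯₃ y) + 2 * (y ⬝ᵥ y) * (v ⬝ᵥ u ⨯₃ y) := by
  rw [radialForm]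
  linear_combination p * dotProduct_self_mul_dotProduct_self y u +
    p * dotProduct_self_mul_dotProduct_self y v

lemma le_dotProduct_self_mul_radialForm (p s : ℝ) (y u v : Fin 3 → ℝ) :
    (p + s * (y ⬝ᵥ y)) * ((y ⬝ᵥ u) ^ 2 + (y ⬝ᵥ v) ^ 2) +
        (p - √(y ⬝ᵥ y)) * (u ⨯₃ y ⬝ᵥ u ⨯₃ y + v ⨯₃ y ⬝ᵥ v ⨯₃ y) ≤
      (y ⬝ᵥ y) * radialForm p s y u v := by
  have htriple := neg_le_of_abs_le (abs_two_mul_sqrt_mul_triple_product_le v u y)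
  have hscaled := mul_le_mul_of_nonneg_left htriple (Real.sqrt_nonneg (y ⬝ᵥ y))
  rw [dotProduct_self_mul_radialForm]
  linear_combination hscaled + 2 * (v ⬝ᵥ u ⨯₃ y) * sq_sqrt_dotProduct_self y

lemma radialForm_pos (hy : y ≠ 0) (hp : √(y ⬝ᵥ y) < p) (hs : 0 < p + s * (y ⬝ᵥ y))
    {u v : Fin 3 → ℝ} (huv : u ≠ 0 ∨ v ≠ 0) : 0 < radialForm p s y u v := by
  have hyy := dotProduct_self_pos hy
  have huv_pos : 0 < u ⬝ᵥ u + v ⬝ᵥ v := by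
    rcases huv with hu | hv
    · exact add_pos_of_pos_of_nonneg (dotProduct_self_pos hu) (dotProduct_self_nonneg v)
    · exact add_pos_of_nonneg_of_pos (dotProduct_self_nonneg u) (dotProduct_self_pos hv)
  set m := min (p + s * (y ⬝ᵥ y)) (p - √(y ⬝ᵥ y))
  have hm : 0 < m := lt_min hs (sub_pos.2 hp)
  refine pos_of_mul_pos_right ?_ hyy.le
  calc 0 < m * ((y ⬝ᵥ y) * (u ⬝ᵥ u + v ⬝ᵥ v)) := mul_pos hm (mul_pos hyy huv_pos)
    _ = m * ((y ⬝ᵥ u) ^ 2 + (y ⬝ᵥ v) ^ 2) +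
          m * (u ⨯₃ y ⬝ᵥ u ⨯₃ y + v ⨯₃ y ⬝ᵥ v ⨯₃ y) := by
        rw [mul_add (y ⬝ᵥ y), dotProduct_self_mul_dotProduct_self,
          dotProduct_self_mul_dotProduct_self]
        ring
    _ ≤ (p + s * (y ⬝ᵥ y)) * ((y ⬝ᵥ u) ^ 2 + (y ⬝ᵥ v) ^ 2) +
          (p - √(y ⬝ᵥ y)) * (u ⨯₃ y ⬝ᵥ u ⨯₃ y + v ⨯₃ y ⬝ᵥ v ⨯₃ y) :=
        add_le_add (mul_le_mul_of_nonneg_right (min_le_left _ _) (by positivity))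
          (mul_le_mul_of_nonneg_right (min_le_right _ _)
            (add_nonneg (dotProduct_self_nonneg _) (dotProduct_self_nonneg _)))
    _ ≤ (y ⬝ᵥ y) * radialForm p s y u v := le_dotProduct_self_mul_radialForm p s y u v

end RadialForm

theorem posDef_fromBlocks_muMat_iff {p s : ℝ} {y : Fin 3 → ℝ} (hy : y ≠ 0) :
    (fromBlocks (p • 1 + s • vecMulVec y y) (-muMat y) (muMat y)
        (p • 1 + s • vecMulVec y y)).PosDef ↔
      √(y ⬝ᵥ y) < p ∧ 0 < p + s * (y ⬝ᵥ y) := by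
  have hyy := dotProduct_self_pos hy
  rw [posDef_fromBlocks_muMat_iff_radialForm_pos]
  refine ⟨fun h => ⟨?_, ?_⟩, fun h u v => radialForm_pos hy h.1 h.2⟩
  · obtain ⟨w, hw0, hw⟩ := exists_ne_zero_dotProduct_eq_zero y
    have hww := dotProduct_self_pos hw0
    have hpos := h _ (-(w ⨯₃ y)) (.inl (smul_ne_zero (Real.sqrt_pos.2 hyy).ne' hw0))
    rw [radialForm_of_dotProduct_eq_zero p s hw] at hpos
    exact sub_pos.1 (pos_of_mul_pos_right hpos (by positivity))
  · have hpos := h y 0 (.inl hy)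
    rw [radialForm_self_zero] at hpos
    exact pos_of_mul_pos_right hpos hyy.le

/-- The right-hand side `F(t, p, q)` of the radial ODE `x″ = F(t, x, x′)`. The denominator vanishes
for `t = 0` and for `q² = 2t`, where the division returns `0`. -/
noncomputable def radialODERhs (t p q : ℝ) : ℝ :=
  (8 * p - 10 * t * q - 3 * q ^ 3) / (6 * (q ^ 2 * t - 2 * t ^ 2))

lemma add_two_mul_mul_radialODERhs {t q : ℝ} (p : ℝ) (ht : t ≠ 0) (hq : q ^ 2 ≠ 2 * t) :
    q + 2 * t * radialODERhs t p q = 8 * (p - 2 * t * q) / (3 * (q ^ 2 - 2 * t)) := by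
  have hq' : q ^ 2 - 2 * t ≠ 0 := sub_ne_zero.2 hq
  have hfactor : q ^ 2 * t - 2 * t ^ 2 = t * (q ^ 2 - 2 * t) := by ring
  rw [radialODERhs, hfactor]
  field_simp
  ring

lemma add_two_mul_mul_radialODERhs_pos {t p q : ℝ} (ht : 0 < t) (hp : 2 * t * q < p)
    (hq : √(2 * t) < q) : 0 < q + 2 * t * radialODERhs t p q := by
  have hq' : 2 * t < q ^ 2 := Real.lt_sq_of_sqrt_lt hq
  rw [add_two_mul_mul_radialODERhs p ht.ne' hq'.ne']
  exact div_pos (by linarith) (by linarith)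

theorem admissible_set_radial_general {x : ℝ → ℝ} {y : Fin 3 → ℝ} {t : ℝ}
    (ht : t = halfNormSq y) (htpos : 0 < t) (hx : ∀ᶠ s in 𝓝 t, DifferentiableAt ℝ x s)
    (hx' : DifferentiableAt ℝ (deriv x) t) {φ : (Fin 3 → ℝ) → ℝ}
    (hφ : φ = fun z => x (halfNormSq z)) :
    (0 < φ y - radialDeriv φ y ∧
        (fromBlocks (hessian φ y) (-muMat y) (muMat y) (hessian φ y)).PosDef) ↔
      (2 * t * deriv x t < x t ∧ √(2 * t) < deriv x t) ∧
        0 < deriv x t + 2 * t * deriv (deriv x) t := by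
  subst ht hφ
  have hyy := dotProduct_self_eq_two_mul_halfNormSq y
  have hy : y ≠ 0 := by
    rintro rfl
    simp [halfNormSq] at htpos
  rw [radialDeriv_comp_halfNormSq hx.self_of_nhds, hessian_comp_halfNormSq hx hx',
    posDef_fromBlocks_muMat_iff hy, sub_pos, hyy, mul_comm (deriv (deriv x) _), and_assoc]

/-- Let `x : (0,∞) → ℝ` be C², `y ∈ ℝ³` with `t := |y|²/2 > 0`,
`x′(t)² ≠ 2t`, and suppose `x″(t) = (8x(t) − 10t·x′(t) − 3x′(t)³)/(6(x′(t)²·t − 2t²))`.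
With `φ(z) := x(|z|²/2)` and `D(y) = [[Hess φ(y), −μ(y)], [μ(y), Hess φ(y)]]`, the
conditions `φ(y) − ∂_r φ(y) > 0` and `D(y)` positive definite hold simultaneously
if and only if `x(t) > 2t·x′(t)` and `x′(t) > √(2t)`. -/
theorem admissible_set_radial (x : ℝ → ℝ) (hx : ContDiffOn ℝ 2 x (Set.Ioi 0))
    (y : Fin 3 → ℝ) (t : ℝ) (ht : t = (∑ i, (y i) ^ 2) / 2) (htpos : 0 < t)
    (hne : (deriv x t) ^ 2 ≠ 2 * t)
    (hode : deriv (deriv x) t =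
      (8 * x t - 10 * t * deriv x t - 3 * (deriv x t) ^ 3) /
        (6 * ((deriv x t) ^ 2 * t - 2 * t ^ 2)))
    (φ : (Fin 3 → ℝ) → ℝ) (hφ : φ = fun z => x ((∑ i, (z i) ^ 2) / 2)) :
    (0 < φ y - radialDeriv φ y ∧
        (Matrix.fromBlocks (hessian φ y) (-(muMat y)) (muMat y) (hessian φ y)).PosDef) ↔
      (2 * t * deriv x t < x t ∧ Real.sqrt (2 * t) < deriv x t) := by
  have hx₁ : ∀ᶠ s in 𝓝 t, DifferentiableAt ℝ x s := by
    filter_upwards [Ioi_mem_nhds htpos] with s hs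
    exact (hx.differentiableOn two_ne_zero).differentiableAt (Ioi_mem_nhds hs)
  have hx₂ : DifferentiableAt ℝ (deriv x) t :=
    ((hx.deriv_of_isOpen isOpen_Ioi one_add_one_eq_two.le).differentiableOn
      one_ne_zero).differentiableAt (Ioi_mem_nhds htpos)
  refine (admissible_set_radial_general ht htpos hx₁ hx₂ hφ).trans
    (and_iff_left_of_imp fun ⟨hxt, hp⟩ => ?_)
  rw [hode]
  exact add_two_mul_mul_radialODERhs_pos htpos hxt hp
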